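/- Fix an integer N ≥ 2, t ∈ [0,1], n ≥ 1 and x ∈ [0,1]. Then ρ^t_N({y ∈ [0,1] : R_N^n(y) < x}) = ∫_{[0,1]} Nx/(N − (1−x)(1−s^t_{N,n}(y))) dρ^t_N(y), where s^t_{N,n}(y) is the random variable defined from the digits of y by s^t_{N,0}(y) = t and s^t_{N,k}(y) = 1 − N/(a_k(y) + s^t_{N,k−1}(y)). -/

import Mathlib

open MeasureTheory Set Real Filter

/-- The Rényi-type continued fraction map `R_N`. -/
noncomputable def RN (N : ℕ) (x : ℝ) : ℝ :=
  if x = 1 then 0 else (N : ℝ) / (1 - x) - ⌊(N : ℝ) / (1 - x)⌋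

/-- `digit N k x` is the `(k+1)`-st digit `a_{k+1}(x)`. -/
noncomputable def digit (N k : ℕ) (x : ℝ) : ℤ :=
  ⌊(N : ℝ) / (1 - (RN N)^[k] x)⌋

/-- The conditional probability measure `ρ^t_N`, with density
`N(N-1+t)/[N-(1-x)(1-t)]²` on `[0,1]`. -/
noncomputable def rhoT (N : ℕ) (t : ℝ) : Measure ℝ :=
  (volume.restrict (Set.Icc (0 : ℝ) 1)).withDensity fun x =>
    ENNReal.ofReal ((N : ℝ) * ((N : ℝ) - 1 + t) / ((N : ℝ) - (1 - x) * (1 - t)) ^ 2)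

/-- `s^t_{N,k}(y)` built from the digits of `y`. -/
noncomputable def sVar (N : ℕ) (t y : ℝ) : ℕ → ℝ
  | 0 => t
  | k + 1 => 1 - (N : ℝ) / ((digit N k y : ℝ) + sVar N t y k)

/-- Density of `rhoT`. -/
noncomputable def hDen (N : ℕ) (t x : ℝ) : ℝ :=
  (N : ℝ) * ((N : ℝ) - 1 + t) / ((N : ℝ) - (1 - x) * (1 - t)) ^ 2

/-- Inverse branches of the map. -/
noncomputable def brN (N k : ℕ) (u : ℝ) : ℝ := 1 - (N : ℝ) / ((N : ℝ) + k + u)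

/-- Weight of the branch. -/
noncomputable def wtN (N : ℕ) (t : ℝ) (k : ℕ) : ℝ :=
  ((N : ℝ) - 1 + t) / (((N : ℝ) + k - 1 + t) * ((N : ℝ) + k + t))

lemma hDen_meas (N : ℕ) (t : ℝ) : Measurable (hDen N t) := by
  unfold hDen; fun_prop

lemma lint_rhoT (N : ℕ) (t : ℝ) (G : ℝ → ENNReal) :
    ∫⁻ y, G y ∂(rhoT N t) = ∫⁻ y in Ico (0:ℝ) 1, ENNReal.ofReal (hDen N t y) * G y := by
  unfold rhoT
  rw [lintegral_withDensity_eq_lintegral_mul_non_measurable]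
  · rw [Measure.restrict_congr_set (Ico_ae_eq_Icc (a := (0:ℝ)) (b := 1)).symm]
    rfl
  · exact (hDen_meas N t).ennreal_ofReal
  · exact Eventually.of_forall fun x => ENNReal.ofReal_lt_top

lemma lint_congr (N : ℕ) (t : ℝ) (G H : ℝ → ENNReal) (h : ∀ u ∈ Ico (0:ℝ) 1, G u = H u) :
    ∫⁻ y, G y ∂(rhoT N t) = ∫⁻ y, H y ∂(rhoT N t) := by
  rw [lint_rhoT, lint_rhoT]
  refine setLIntegral_congr_fun measurableSet_Ico fun u hu => ?_
  simp only [h u hu]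

lemma brN_mem (N : ℕ) (hN : 2 ≤ N) (k : ℕ) (u : ℝ) (hu : u ∈ Icc (0:ℝ) 1) :
    brN N k u ∈ Ico (0:ℝ) 1 := by
  have h2 : (2:ℝ) ≤ N := by exact_mod_cast hN
  have hk : (0:ℝ) ≤ k := Nat.cast_nonneg k
  have := hu.1
  unfold brN
  constructor
  · rw [sub_nonneg, div_le_one (by linarith)]; linarith
  · have : 0 < (N:ℝ) / (N + k + u) := by apply div_pos <;> linarith
    linarith

lemma brN_inv (N : ℕ) (hN : 2 ≤ N) (k : ℕ) (u : ℝ) (hu : u ∈ Ico (0:ℝ) 1) :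
    (N:ℝ) / (1 - brN N k u) = N + k + u := by
  have h2 : (2:ℝ) ≤ N := by exact_mod_cast hN
  have hk : (0:ℝ) ≤ k := Nat.cast_nonneg k
  have := hu.1
  have : (N:ℝ) + k + u ≠ 0 := by linarith
  have : (N:ℝ) ≠ 0 := by linarith
  unfold brN
  field_simp
  ring_nf
  try field_simp

lemma floor_br (N : ℕ) (hN : 2 ≤ N) (k : ℕ) (u : ℝ) (hu : u ∈ Ico (0:ℝ) 1) :
    ⌊(N:ℝ) / (1 - brN N k u)⌋ = (N:ℤ) + k := by
  rw [brN_inv N hN k u hu, Int.floor_eq_iff]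
  push_cast
  constructor <;> linarith [hu.1, hu.2]

lemma RN_br (N : ℕ) (hN : 2 ≤ N) (k : ℕ) (u : ℝ) (hu : u ∈ Ico (0:ℝ) 1) :
    RN N (brN N k u) = u := by
  have := (brN_mem N hN k u ⟨hu.1, hu.2.le⟩).2
  unfold RN
  rw [if_neg this.ne, floor_br N hN k u hu, brN_inv N hN k u hu]
  push_cast; ring

lemma union_br (N : ℕ) (hN : 2 ≤ N) :
    (⋃ k : ℕ, brN N k '' Ico (0:ℝ) 1) = Ico (0:ℝ) 1 := by
  have h2 : (2:ℝ) ≤ N := by exact_mod_cast hN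
  ext y
  simp only [mem_iUnion, mem_image]
  constructor
  · rintro ⟨k, u, hu, rfl⟩
    exact brN_mem N hN k u ⟨hu.1, hu.2.le⟩
  · intro hy
    have hy1 : 0 < 1 - y := by linarith [hy.2]
    have hge : (N:ℝ) ≤ N / (1 - y) := by
      rw [le_div_iff₀ hy1]; nlinarith [hy.1]
    obtain ⟨k, hk⟩ : ∃ k : ℕ, ⌊(N:ℝ) / (1 - y)⌋ = (N:ℤ) + k := by
      have : (N:ℤ) ≤ ⌊(N:ℝ) / (1 - y)⌋ := by rw [Int.le_floor]; exact_mod_cast hge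
      exact ⟨(⌊(N:ℝ) / (1 - y)⌋ - N).toNat, by omega⟩
    have hf := Int.floor_eq_iff.1 hk
    push_cast at hf
    refine ⟨k, (N:ℝ) / (1 - y) - (N + k), ⟨by linarith, by linarith⟩, ?_⟩
    unfold brN
    have e : (N:ℝ) + k + ((N:ℝ) / (1 - y) - (N + k)) = N / (1 - y) := by ring
    rw [e]
    have : (N:ℝ) ≠ 0 := by linarith
    field_simp
    ring

lemma disj_br (N : ℕ) (hN : 2 ≤ N) :
    Pairwise (Function.onFun Disjoint fun k : ℕ => brN N k '' Ico (0:ℝ) 1) := by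
  intro i j hij
  refine Set.disjoint_left.2 ?_
  rintro y ⟨u, hu, rfl⟩ ⟨v, hv, hvy⟩
  have h1 := floor_br N hN i u hu
  have h2 := floor_br N hN j v hv
  rw [hvy, h1] at h2
  omega

lemma brN_deriv (N : ℕ) (hN : 2 ≤ N) (k : ℕ) (u : ℝ) (hu : u ∈ Ico (0:ℝ) 1) :
    HasDerivWithinAt (brN N k) ((N:ℝ) / (N + k + u) ^ 2) (Ico 0 1) u := by
  have h2 : (2:ℝ) ≤ N := by exact_mod_cast hN
  have hk : (0:ℝ) ≤ k := Nat.cast_nonneg k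
  have := hu.1
  have h0 : (N:ℝ) + k + u ≠ 0 := by linarith
  have h1 : HasDerivAt (fun u : ℝ => (N:ℝ) + k + u) 1 u := (hasDerivAt_id u).const_add _
  have h3 := ((hasDerivAt_const u (N:ℝ)).div h1 h0).const_sub 1
  refine HasDerivAt.hasDerivWithinAt ?_
  unfold brN
  have e : (N:ℝ) / (N + k + u) ^ 2
      = -((0 * ((N:ℝ) + k + u) - N * 1) / ((N:ℝ) + k + u) ^ 2) := by ring
  rw [e]
  exact h3

lemma brN_inj (N : ℕ) (hN : 2 ≤ N) (k : ℕ) : InjOn (brN N k) (Ico 0 1) := by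
  intro u hu v hv h
  rw [← RN_br N hN k u hu, ← RN_br N hN k v hv, h]

lemma brN_image_meas (N : ℕ) (hN : 2 ≤ N) (k : ℕ) :
    MeasurableSet (brN N k '' Ico (0:ℝ) 1) := by
  refine measurableSet_Ico.image_of_continuousOn_injOn ?_ (brN_inj N hN k)
  intro u hu
  exact (brN_deriv N hN k u hu).continuousWithinAt

lemma den_id (N : ℕ) (hN : 2 ≤ N) (t : ℝ) (ht : t ∈ Icc (0:ℝ) 1) (k : ℕ) (u : ℝ)
    (hu : u ∈ Ico (0:ℝ) 1) :
    (N:ℝ) / (N + k + u) ^ 2 * hDen N t (brN N k u) = wtN N t k * hDen N (brN N k t) u := by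
  have h2 : (2:ℝ) ≤ N := by exact_mod_cast hN
  have hk : (0:ℝ) ≤ k := Nat.cast_nonneg k
  have := hu.1
  have := ht.1
  have h0 : (N:ℝ) + k + u ≠ 0 := by linarith
  have h1 : (N:ℝ) + k + t ≠ 0 := by linarith
  have h3 : (N:ℝ) + k - 1 + t ≠ 0 := by linarith
  have h4 : (N:ℝ) + k - 1 + t + u ≠ 0 := by linarith
  have hn : (N:ℝ) ≠ 0 := by linarith
  have e1 : (N:ℝ) - (1 - brN N k u) * (1 - t) = N * (N + k - 1 + t + u) / (N + k + u) := by
    unfold brN; field_simp; ring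
  have e2 : (N:ℝ) - (1 - u) * (1 - brN N k t) = N * (N + k - 1 + t + u) / (N + k + t) := by
    unfold brN; field_simp; ring
  have e3 : (N:ℝ) - 1 + brN N k t = N * (N + k - 1 + t) / (N + k + t) := by
    unfold brN; field_simp; ring
  unfold hDen wtN
  rw [e1, e2, e3]
  field_simp

lemma hDen_nonneg (N : ℕ) (hN : 2 ≤ N) (t : ℝ) (ht : t ∈ Icc (0:ℝ) 1) (u : ℝ) :
    0 ≤ hDen N t u := by
  have h2 : (2:ℝ) ≤ N := by exact_mod_cast hN
  have := ht.1
  unfold hDen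
  have : 0 ≤ (N:ℝ) - 1 + t := by linarith
  positivity

lemma wtN_nonneg (N : ℕ) (hN : 2 ≤ N) (t : ℝ) (ht : t ∈ Icc (0:ℝ) 1) (k : ℕ) :
    0 ≤ wtN N t k := by
  have h2 : (2:ℝ) ≤ N := by exact_mod_cast hN
  have hk : (0:ℝ) ≤ k := Nat.cast_nonneg k
  have := ht.1
  unfold wtN
  have : 0 ≤ (N:ℝ) - 1 + t := by linarith
  have : 0 ≤ (N:ℝ) + k - 1 + t := by linarith
  positivity

lemma transfer (N : ℕ) (hN : 2 ≤ N) (t : ℝ) (ht : t ∈ Icc (0:ℝ) 1) (G : ℝ → ENNReal)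
    (H : ℕ → ℝ → ENNReal) (hGH : ∀ k, ∀ u ∈ Ico (0:ℝ) 1, G (brN N k u) = H k u) :
    ∫⁻ y, G y ∂(rhoT N t)
      = ∑' k : ℕ, ENNReal.ofReal (wtN N t k) * ∫⁻ u, H k u ∂(rhoT N (brN N k t)) := by
  rw [lint_rhoT, ← union_br N hN,
    lintegral_iUnion (fun k => brN_image_meas N hN k) (disj_br N hN)]
  congr 1
  ext k
  rw [lintegral_image_eq_lintegral_abs_deriv_mul measurableSet_Ico
    (fun u hu => brN_deriv N hN k u hu) (brN_inj N hN k), lint_rhoT,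
    ← lintegral_const_mul' _ _ ENNReal.ofReal_ne_top]
  refine setLIntegral_congr_fun measurableSet_Ico fun u hu => ?_
  simp only [hGH k u hu]
  rw [← mul_assoc, ← mul_assoc, ← ENNReal.ofReal_mul (abs_nonneg _),
    ← ENNReal.ofReal_mul (wtN_nonneg N hN t ht k), ← den_id N hN t ht k u hu,
    abs_of_nonneg (by positivity)]

lemma RN_mem (N : ℕ) (y : ℝ) : RN N y ∈ Ico (0:ℝ) 1 := by
  unfold RN
  split_ifs
  · simp
  · exact ⟨Int.fract_nonneg _, Int.fract_lt_one _⟩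

lemma digit_succ (N k : ℕ) (y : ℝ) : digit N (k+1) y = digit N k (RN N y) := rfl

lemma sVar_br (N : ℕ) (hN : 2 ≤ N) (t : ℝ) (k : ℕ) (u : ℝ) (hu : u ∈ Ico (0:ℝ) 1) (n : ℕ) :
    sVar N t (brN N k u) (n+1) = sVar N (brN N k t) u n := by
  induction n with
  | zero =>
    simp only [sVar, digit, Function.iterate_zero, id, floor_br N hN k u hu]
    unfold brN; push_cast; rfl
  | succ n ih =>
    rw [sVar, ih, digit_succ, RN_br N hN k u hu, sVar]

lemma sVar_mem (N : ℕ) (hN : 2 ≤ N) (t : ℝ) (ht : t ∈ Icc (0:ℝ) 1) (n : ℕ) :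
    ∀ y ∈ Ico (0:ℝ) 1, sVar N t y n ∈ Icc (0:ℝ) 1 := by
  induction n generalizing t with
  | zero => intro y _; exact ht
  | succ n ih =>
    intro y hy
    rw [← union_br N hN] at hy
    simp only [mem_iUnion, mem_image] at hy
    obtain ⟨k, u, hu, rfl⟩ := hy
    rw [sVar_br N hN t k u hu]
    exact ih _ (Ico_subset_Icc_self (brN_mem N hN k t ht)) u hu

lemma lint_lt (N : ℕ) (hN : 2 ≤ N) (t : ℝ) (ht : t ∈ Icc (0:ℝ) 1) (x : ℝ)
    (hx : x ∈ Icc (0:ℝ) 1) :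
    ∫⁻ y, (Iio x).indicator 1 y ∂(rhoT N t)
      = ENNReal.ofReal ((N : ℝ) * x / ((N : ℝ) - (1 - x) * (1 - t))) := by
  have h2 : (2:ℝ) ≤ N := by exact_mod_cast hN
  have hd : ∀ y ∈ Icc (0:ℝ) x, 0 < (N:ℝ) - (1 - y) * (1 - t) := by
    intro y hy
    nlinarith [hy.1, hy.2, hx.2, ht.1, ht.2, mul_nonneg hy.1 (sub_nonneg.2 ht.2)]
  rw [lint_rhoT]
  have e : ∀ y, ENNReal.ofReal (hDen N t y) * (Iio x).indicator 1 y
      = (Iio x).indicator (fun y => ENNReal.ofReal (hDen N t y)) y := by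
    intro y
    by_cases h : y ∈ Iio x <;> simp [h]
  simp only [e]
  rw [setLIntegral_indicator measurableSet_Iio]
  have es : Iio x ∩ Ico (0:ℝ) 1 = Ico 0 x := by
    ext y; simp only [mem_inter_iff, mem_Iio, mem_Ico]
    constructor
    · rintro ⟨a, b, c⟩; exact ⟨b, a⟩
    · rintro ⟨a, b⟩; exact ⟨b, a, b.trans_le hx.2⟩
  have hc : ContinuousOn (hDen N t) (Icc 0 x) := by
    unfold hDen
    refine ContinuousOn.div (by fun_prop) (by fun_prop) fun y hy => ?_
    exact (pow_pos (hd y hy) 2).ne'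
  rw [es, Measure.restrict_congr_set (Ico_ae_eq_Ioc (a := (0:ℝ)) (b := x)),
    ← ofReal_integral_eq_lintegral_ofReal
      ((hc.integrableOn_Icc).mono_set Ioc_subset_Icc_self)
      (Eventually.of_forall (hDen_nonneg N hN t ht)),
    ← intervalIntegral.integral_of_le hx.1]
  congr 1
  rw [intervalIntegral.integral_eq_sub_of_hasDerivAt
    (f := fun y => (N : ℝ) * y / ((N : ℝ) - (1 - y) * (1 - t)))]
  · simp
  · intro y hy
    rw [uIcc_of_le hx.1] at hy
    have h1 : HasDerivAt (fun y : ℝ => (N:ℝ) * y) N y := by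
      simpa using (hasDerivAt_id y).const_mul (N:ℝ)
    have h3 : HasDerivAt (fun y : ℝ => (N : ℝ) - (1 - y) * (1 - t)) (1 - t) y := by
      have h4 := ((((hasDerivAt_id y).const_sub 1).mul_const (1 - t)).const_sub (N:ℝ))
      have e4 : -(-1 * (1 - t)) = 1 - t := by ring
      rw [e4] at h4
      exact h4
    have h5 := h1.div h3 (hd y hy).ne'
    have e5 : ((N:ℝ) * ((N : ℝ) - (1 - y) * (1 - t)) - (N:ℝ) * y * (1 - t))
        / ((N : ℝ) - (1 - y) * (1 - t)) ^ 2 = hDen N t y := by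
      unfold hDen
      congr 1
      ring
    rw [e5] at h5
    exact h5
  · rw [← uIcc_of_le hx.1] at hc
    exact hc.intervalIntegrable

lemma rhoT_univ (N : ℕ) (hN : 2 ≤ N) (t : ℝ) (ht : t ∈ Icc (0:ℝ) 1) :
    rhoT N t univ = 1 := by
  have h2 : (2:ℝ) ≤ N := by exact_mod_cast hN
  have hn : (N:ℝ) ≠ 0 := by linarith
  have h := lint_lt N hN t ht 1 (by simp)
  rw [lint_congr N t _ (fun _ => 1)] at h
  · simpa [hn] using h
  · intro u hu
    simp [hu.2]

lemma RN_meas (N : ℕ) : Measurable (RN N) := by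
  unfold RN
  refine Measurable.ite (measurableSet_singleton _) measurable_const ?_
  exact (measurable_fract.comp (by fun_prop : Measurable fun x : ℝ => (N:ℝ) / (1 - x)))

lemma sVar_meas (N : ℕ) (t : ℝ) (n : ℕ) : Measurable fun y => sVar N t y n := by
  induction n with
  | zero => exact measurable_const
  | succ n ih =>
    have hd : Measurable fun y => ((digit N n y : ℤ) : ℝ) := by
      have h1 : Measurable fun y => (N:ℝ) / (1 - (RN N)^[n] y) :=
        measurable_const.div (measurable_const.sub ((RN_meas N).iterate n))
      exact (measurable_from_top (f := fun z : ℤ => (z:ℝ))).comp (Int.measurable_floor.comp h1)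
    simp only [sVar]
    exact measurable_const.sub (measurable_const.div (hd.add ih))

lemma main_lint (N : ℕ) (hN : 2 ≤ N) (x : ℝ) (hx : x ∈ Icc (0:ℝ) 1) (n : ℕ) :
    ∀ t ∈ Icc (0:ℝ) 1,
    ∫⁻ y, (Iio x).indicator 1 ((RN N)^[n] y) ∂(rhoT N t)
      = ∫⁻ y, ENNReal.ofReal ((N : ℝ) * x / ((N : ℝ) - (1 - x) * (1 - sVar N t y n)))
          ∂(rhoT N t) := by
  induction n with
  | zero =>
    intro t ht
    simp only [Function.iterate_zero, id, sVar]
    rw [lint_lt N hN t ht x hx, lintegral_const, rhoT_univ N hN t ht, mul_one]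
  | succ n ih =>
    intro t ht
    rw [transfer N hN t ht _ (fun _ u => (Iio x).indicator 1 ((RN N)^[n] u)),
      transfer N hN t ht _ (fun k u => ENNReal.ofReal
        ((N : ℝ) * x / ((N : ℝ) - (1 - x) * (1 - sVar N (brN N k t) u n))))]
    · congr 1
      ext k
      rw [ih _ (Ico_subset_Icc_self (brN_mem N hN k t ht))]
    · intro k u hu
      rw [sVar_br N hN t k u hu]
    · intro k u hu
      rw [Function.iterate_succ_apply, RN_br N hN k u hu]

lemma ae_Ico (N : ℕ) (t : ℝ) : ∀ᵐ y ∂(rhoT N t), y ∈ Ico (0:ℝ) 1 := by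
  have h := lint_congr N t ((Ico (0:ℝ) 1)ᶜ.indicator 1) 0 (by intro u hu; simp [hu.1, hu.2])
  rw [lintegral_indicator_one measurableSet_Ico.compl] at h
  rw [ae_iff]
  have h0 : (rhoT N t) (Ico (0:ℝ) 1)ᶜ = 0 := by simpa using h
  exact h0

theorem stmt4 (N : ℕ) (hN : 2 ≤ N) (t : ℝ) (ht : t ∈ Set.Icc (0 : ℝ) 1)
    (n : ℕ) (hn : 1 ≤ n) (x : ℝ) (hx : x ∈ Set.Icc (0 : ℝ) 1) :
    (rhoT N t {y | y ∈ Set.Icc (0 : ℝ) 1 ∧ (RN N)^[n] y < x}).toReal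
      = ∫ y, (N : ℝ) * x / ((N : ℝ) - (1 - x) * (1 - sVar N t y n)) ∂(rhoT N t) := by
  have h2 : (2:ℝ) ≤ N := by exact_mod_cast hN
  have hm : Measurable fun y =>
      (N : ℝ) * x / ((N : ℝ) - (1 - x) * (1 - sVar N t y n)) :=
    measurable_const.div (measurable_const.sub
      (measurable_const.mul (measurable_const.sub (sVar_meas N t n))))
  rw [integral_eq_lintegral_of_nonneg_ae _ hm.aestronglyMeasurable, ← main_lint N hN x hx n t ht]
  · congr 1
    have hS : MeasurableSet {y | y ∈ Set.Icc (0 : ℝ) 1 ∧ (RN N)^[n] y < x} :=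
      measurableSet_Icc.inter (measurableSet_lt ((RN_meas N).iterate n) measurable_const)
    rw [← lintegral_indicator_one hS]
    refine lint_congr N t _ _ fun u hu => ?_
    by_cases h : (RN N)^[n] u < x
    · simp [h, hu.1, hu.2.le]
    · simp [h]
  · filter_upwards [ae_Ico N t] with y hy
    have hs := sVar_mem N hN t ht n y hy
    refine div_nonneg (mul_nonneg (by linarith) hx.1) ?_
    nlinarith [hs.1, hs.2, hx.1, hx.2, mul_nonneg hx.1 (sub_nonneg.2 hs.2)]
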